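/- arXiv:2103.07650 — 2 statements merged into one kernel-verified Lean document; each statement's English description precedes it below -/
import Mathlib

section
/- Suppose the real coefficients {A^{αβ} : α, β = 0,1,2,3} satisfy the null condition. Then there exists a constant C > 0, depending only on the coefficients, such that for all C^∞ functions v, w on [0,∞) × ℝ³ and all (t, x) ∈ [0,∞) × ℝ³: |A^{αβ}(∂_α v)(∂_β w)(t,x)| ≤ C (1+t)^{−1} Σ_{|a|=1} ( |Γ^a v(t,x)| |∂w(t,x)| + |∂v(t,x)| |Γ^a w(t,x)| ), where the sum is over all single applications of the Klainerman vector fields and summation over repeated indices α, β ∈ {0,1,2,3} is understood. -/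
/-!
A bilinear form `B` that vanishes on the null cone satisfies `B X X = B e₀ e₀ * η X X`, where `η` is
the Minkowski form: compare the two null vectors `±r e₀ + u` over each spacelike `u ⊥ e₀`. So the
symmetric part of `B` is a multiple of `η`, and `B` is a linear combination of `Q₀ = η` and the
antisymmetric forms `Q_{αβ}(a, b) = a_α b_β - a_β b_α`.

Put `x_0 = -t` and `Ω_{αβ} = x_α ∂_β - x_β ∂_α`, so that `Ω_{j0} = L_j`. The gain of a factor `t` is
pointwise algebra in the first derivatives:
* `t Q₀(∂v, ∂w) = S v ∂ₜw - ∑ ∂_j v L_j w`,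
* `t Q_{αβ}(∂v, ∂w) = Ω_{α0} v ∂_β w - Ω_{β0} v ∂_α w - ∂ₜv Ω_{αβ} w`.

Adding the trivial bounds for `Q₀` and `Q_{αβ}` themselves gives the weight `1 + |t|`.
-/

open MeasureTheory Real ENNReal FourierTransform
open scoped ContDiff

noncomputable section

/-- Euclidean space ℝⁿ. -/
abbrev Spc (n : ℕ) := EuclideanSpace ℝ (Fin n)

/-- Space-time ℝ × ℝⁿ. -/
abbrev STn (n : ℕ) := ℝ × Spc n

variable {n : ℕ}

/-- Directional derivative in the space-time direction `v`. -/
def dirD (v : STn n) (f : STn n → ℝ) : STn n → ℝ := fun p => fderiv ℝ f p v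

/-- Time derivative ∂_t. -/
def dtD : (STn n → ℝ) → STn n → ℝ := dirD (1, 0)

/-- Spatial derivative ∂_j. -/
def dxD (j : Fin n) : (STn n → ℝ) → STn n → ℝ := dirD (0, EuclideanSpace.single j 1)

/-- Spatial Laplacian. -/
def lapD (f : STn n → ℝ) : STn n → ℝ := fun p => ∑ j, dxD j (dxD j f) p

/-- d'Alembertian □ = ∂_t² − Δ. -/
def boxD (f : STn n → ℝ) : STn n → ℝ := fun p => dtD (dtD f) p - lapD f p

/-- Lorentz boost L_j = t ∂_j + x_j ∂_t. -/
def LD (j : Fin n) (f : STn n → ℝ) : STn n → ℝ := fun p => p.1 * dxD j f p + p.2 j * dtD f p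

/-- Rotation Ω_{jk} = x_j ∂_k − x_k ∂_j. -/
def RotD (j k : Fin n) (f : STn n → ℝ) : STn n → ℝ := fun p => p.2 j * dxD k f p - p.2 k * dxD j f p

/-- Scaling S = t ∂_t + x·∇. -/
def SD (f : STn n → ℝ) : STn n → ℝ := fun p => p.1 * dtD f p + ∑ j, p.2 j * dxD j f p

/-- Index type for the Klainerman vector fields. -/
def GIdx (n : ℕ) := Option (Fin n) ⊕ Fin n ⊕ (Fin n × Fin n) ⊕ Unit

instance : Fintype (GIdx n) := by unfold GIdx; infer_instance
instance : DecidableEq (GIdx n) := by unfold GIdx; infer_instance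

/-- The Klainerman vector field with index `i`. -/
def Gop : GIdx n → (STn n → ℝ) → STn n → ℝ
  | Sum.inl none => dtD
  | Sum.inl (some j) => dxD j
  | Sum.inr (Sum.inl j) => LD j
  | Sum.inr (Sum.inr (Sum.inl jk)) => RotD jk.1 jk.2
  | Sum.inr (Sum.inr (Sum.inr _)) => SD

/-- Iterated composition Γ^α along a word of indices. -/
def GwL : List (GIdx n) → (STn n → ℝ) → STn n → ℝ
  | [], f => f
  | a :: l, f => Gop a (GwL l f)

/-- Sum of a quantity over all products of at most `N` Klainerman vector fields. -/
def SumW (N : ℕ) (Φ : (STn n → ℝ) → ℝ≥0∞) (f : STn n → ℝ) : ℝ≥0∞ :=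
  ∑ m ∈ Finset.range (N + 1), ∑ w : Fin m → GIdx n, Φ (GwL (List.ofFn w) f)

/-- Pointwise norm of the full space-time gradient ∂u = (∂_t u, ∇_x u). -/
def gradN (f : STn n → ℝ) (p : STn n) : ℝ := Real.sqrt ((dtD f p) ^ 2 + ∑ j, (dxD j f p) ^ 2)

/-- Fourier transform (in space) of a real valued function. -/
def fourierS (g : Spc n → ℝ) : Spc n → ℂ := 𝓕 (fun x => (g x : ℂ))

/-- ‖ |D|^s g ‖_{L²}, i.e. the L² norm of ξ ↦ |ξ|^s (ℱ g)(ξ). -/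
def DsN (s : ℝ) (g : Spc n → ℝ) : ℝ≥0∞ :=
  eLpNorm (fun ξ : Spc n => ‖ξ‖ ^ s * ‖fourierS g ξ‖) 2 volume

/-- The surface measure on the unit sphere of ℝⁿ. -/
def sphM (n : ℕ) : Measure (Metric.sphere (0 : Spc n) 1) := (volume : Measure (Spc n)).toSphere

/-- The L^q norm of g(r ω) over the unit sphere. -/
def sphN (n : ℕ) (q : ℝ) (g : Spc n → ℝ) (r : ℝ) : ℝ≥0∞ :=
  (∫⁻ o, (‖g (r • (o : Spc n))‖₊ : ℝ≥0∞) ^ q ∂(sphM n)) ^ (1 / q)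

/-- The mixed norm ‖g‖_{p,q} = (∫_0^∞ ‖g(r·)‖_{L^q(S^{n-1})}^p r^{n-1} dr)^{1/p}. -/
def mixN (n : ℕ) (p q : ℝ) (g : Spc n → ℝ) : ℝ≥0∞ :=
  (∫⁻ r in Set.Ioi (0 : ℝ), (sphN n q g r) ^ p * ENNReal.ofReal (r ^ (n - 1))) ^ (1 / p)

/-- A space-time function which is Schwartz in the space variable for each fixed time. -/
def SchwartzInX (v : STn n → ℝ) : Prop :=
  ∀ t : ℝ, ∃ φ : SchwartzMap (Spc n) ℝ, ∀ x, v (t, x) = φ x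

/-- The space-time partial derivatives ∂_0 = ∂_t, ∂_j (j = 1,2,3) on ℝ × ℝ³. -/
def pd4 (α : Fin 4) : (STn 3 → ℝ) → STn 3 → ℝ := Fin.cases dtD (fun j => dxD j) α

/-- The null condition for a set of coefficients {A^{αβ}}. -/
def NullCond (A : Fin 4 → Fin 4 → ℝ) : Prop :=
  ∀ X : Fin 4 → ℝ, (X 0) ^ 2 = (X 1) ^ 2 + (X 2) ^ 2 + (X 3) ^ 2 →
    ∑ α, ∑ β, A α β * X α * X β = 0

/-- The null form A^{αβ} (∂_α v)(∂_β w). -/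
def QF (A : Fin 4 → Fin 4 → ℝ) (v w : STn 3 → ℝ) (p : STn 3) : ℝ :=
  ∑ α, ∑ β, A α β * pd4 α v p * pd4 β w p

/-- The good derivative T_j = ∂_j + (x_j/|x|) ∂_t. -/
def TD (j : Fin 3) (f : STn 3 → ℝ) (p : STn 3) : ℝ := dxD j f p + (p.2 j / ‖p.2‖) * dtD f p

end

section LorentzianForm

variable {V : Type*} [AddCommGroup V] [Module ℝ V] {η B : LinearMap.BilinForm ℝ V} {e : V}

lemma apply_self_eq_mul_of_null (hη : η.IsSymm) (he : η e e = 1)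
    (hneg : ∀ u, η e u = 0 → u ≠ 0 → η u u < 0) (hB : ∀ x, η x x = 0 → B x x = 0) (x : V) :
    B x x = B e e * η x x := by
  obtain ⟨s, u, hu, rfl⟩ : ∃ (s : ℝ) (u : V), η e u = 0 ∧ x = s • e + u :=
    ⟨η e x, x - η e x • e, by simp [he], by simp⟩
  have hu' : η u e = 0 := by rw [hη.eq, hu]
  rcases eq_or_ne u 0 with rfl | hu0
  · simp only [add_zero, map_smul, LinearMap.smul_apply, smul_eq_mul, he]
    ring
  obtain ⟨r, hr, hru⟩ : ∃ r : ℝ, r ≠ 0 ∧ r ^ 2 = -η u u :=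
    ⟨√(-η u u), by simpa [Real.sqrt_eq_zero'] using hneg u hu hu0,
      Real.sq_sqrt (by linarith [hneg u hu hu0])⟩
  have hexpand (F : LinearMap.BilinForm ℝ V) (c : ℝ) :
      F (c • e + u) (c • e + u) = c ^ 2 * F e e + c * (F e u + F u e) + F u u := by
    simp only [map_add, map_smul, LinearMap.add_apply, LinearMap.smul_apply, smul_eq_mul]
    ring
  have hnull (c : ℝ) (hc : c ^ 2 = r ^ 2) : c ^ 2 * B e e + c * (B e u + B u e) + B u u = 0 := by
    rw [← hexpand]
    refine hB _ ?_
    rw [hexpand, he, hu, hu', hc]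
    linear_combination hru
  have hplus := hnull r rfl
  have hminus := hnull (-r) (neg_sq r)
  rw [hexpand, hexpand, he, hu, hu']
  have hcross : B e u + B u e = 0 := by
    have : r * (B e u + B u e) = 0 := by linear_combination (hplus - hminus) / 2
    simpa [hr] using this
  have hdiag : B u u = B e e * η u u := by
    linear_combination (hplus + hminus) / 2 - B e e * hru
  linear_combination s * hcross + hdiag

lemma apply_add_apply_swap_eq_of_null (hη : η.IsSymm) (he : η e e = 1)
    (hneg : ∀ u, η e u = 0 → u ≠ 0 → η u u < 0) (hB : ∀ x, η x x = 0 → B x x = 0) (x y : V) :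
    B x y + B y x = 2 * B e e * η x y := by
  have hdiag := apply_self_eq_mul_of_null hη he hneg hB
  have hsum := hdiag (x + y)
  simp only [map_add, LinearMap.add_apply, hη.eq y x] at hsum
  linear_combination hsum - hdiag x - hdiag y

end LorentzianForm

section NullForm

variable {n : ℕ}

/-- The Minkowski form `diag(1, -1, …, -1)` on covectors of `ℝ^{1+n}`, with time index `0`. -/
noncomputable def minkowskiForm (n : ℕ) : LinearMap.BilinForm ℝ (Fin (n + 1) → ℝ) :=
  (Matrix.diagonal (Fin.cons 1 fun _ => -1)).toBilin'

lemma minkowskiForm_apply (a b : Fin (n + 1) → ℝ) :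
    minkowskiForm n a b = a 0 * b 0 - ∑ j : Fin n, a j.succ * b j.succ := by
  simp [minkowskiForm, Matrix.toBilin'_apply', dotProduct, Matrix.mulVec_diagonal,
    Fin.sum_univ_succ, sub_eq_add_neg]

lemma minkowskiForm_isSymm : (minkowskiForm n).IsSymm :=
  ⟨fun a b => by simp only [minkowskiForm_apply, mul_comm]⟩

lemma minkowskiForm_self_neg {u : Fin (n + 1) → ℝ} (hu : u 0 = 0) (hu0 : u ≠ 0) :
    minkowskiForm n u u < 0 := by
  obtain ⟨j, hj⟩ : ∃ j : Fin n, u j.succ ≠ 0 := by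
    by_contra! h
    exact hu0 (funext (Fin.cases hu h))
  have hpos : 0 < ∑ j : Fin n, u j.succ * u j.succ :=
    Finset.sum_pos' (fun _ _ => mul_self_nonneg _) ⟨j, Finset.mem_univ j, mul_self_pos.2 hj⟩
  rw [minkowskiForm_apply, hu]
  linarith

/-- The basic null form `Q_{αβ}(a, b) = a_α b_β - a_β b_α` on covectors. -/
def basicNullForm (α β : Fin (n + 1)) (a b : Fin (n + 1) → ℝ) : ℝ :=
  a α * b β - a β * b α

/-- The null condition on coefficients `A^{αβ}` in `1 + n` dimensions: the quadratic form of `A`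
vanishes on the null cone. -/
def IsNullMatrix (A : Matrix (Fin (n + 1)) (Fin (n + 1)) ℝ) : Prop :=
  ∀ X, minkowskiForm n X X = 0 → A.toBilin' X X = 0

lemma NullCond.isNullMatrix {A : Fin 4 → Fin 4 → ℝ} (hA : NullCond A) :
    IsNullMatrix (Matrix.of A) := fun X hX => by
  rw [Matrix.toBilin'_apply, ← hA X]
  · simp only [Matrix.of_apply, mul_comm (X _)]
  · simpa [minkowskiForm_apply, Fin.sum_univ_three, sub_eq_zero, sq] using hX

variable {A : Matrix (Fin (n + 1)) (Fin (n + 1)) ℝ}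

lemma IsNullMatrix.toBilin'_eq (hA : IsNullMatrix A) (a b : Fin (n + 1) → ℝ) :
    A.toBilin' a b =
      A 0 0 * minkowskiForm n a b + (∑ α, ∑ β, A α β * basicNullForm α β a b) / 2 := by
  have hsymm : A.toBilin' a b + A.toBilin' b a = 2 * A 0 0 * minkowskiForm n a b := by
    simpa only [Matrix.toBilin'_single] using
      apply_add_apply_swap_eq_of_null (e := Pi.single 0 1) minkowskiForm_isSymm
        (by simp [minkowskiForm])
        (fun u hu => minkowskiForm_self_neg (by simpa [minkowskiForm_apply] using hu)) hA a b
  have hanti : A.toBilin' a b - A.toBilin' b a = ∑ α, ∑ β, A α β * basicNullForm α β a b := by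
    simp only [Matrix.toBilin'_apply, ← Finset.sum_sub_distrib, basicNullForm]
    refine Finset.sum_congr rfl fun α _ => Finset.sum_congr rfl fun β _ => ?_
    ring
  linear_combination (hsymm + hanti) / 2

lemma IsNullMatrix.abs_toBilin'_le (hA : IsNullMatrix A) (a b : Fin (n + 1) → ℝ) :
    |A.toBilin' a b| ≤
      |A 0 0| * |minkowskiForm n a b| + (∑ α, ∑ β, |A α β| * |basicNullForm α β a b|) / 2 := by
  rw [hA.toBilin'_eq a b]
  refine (abs_add_le _ _).trans ?_
  rw [abs_mul, abs_div, abs_two]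
  gcongr
  refine (Finset.abs_sum_le_sum_abs _ _).trans (Finset.sum_le_sum fun α _ => ?_)
  simpa only [abs_mul] using
    Finset.abs_sum_le_sum_abs (fun β => A α β * basicNullForm α β a b) Finset.univ

end NullForm

section KlainermanFields

variable {n : ℕ}

/-- The space-time gradient `(∂_0 f, …, ∂_n f)`, a covector whose index `0` is time. -/
noncomputable def spacetimeGradient (f : STn n → ℝ) (z : STn n) : Fin (n + 1) → ℝ :=
  Fin.cons (dtD f z) fun j => dxD j f z

lemma abs_spacetimeGradient_le_gradN (f : STn n → ℝ) (z : STn n) (α : Fin (n + 1)) :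
    |spacetimeGradient f z α| ≤ gradN f z := by
  have hsum : dtD f z ^ 2 + ∑ j, dxD j f z ^ 2 = ∑ α, spacetimeGradient f z α ^ 2 := by
    simp [spacetimeGradient, Fin.sum_univ_succ]
  rw [gradN, hsum]
  exact Real.abs_le_sqrt (Finset.single_le_sum (f := fun α => spacetimeGradient f z α ^ 2)
    (fun _ _ => sq_nonneg _) (Finset.mem_univ α))

lemma gradN_nonneg (f : STn n → ℝ) (z : STn n) : 0 ≤ gradN f z :=
  Real.sqrt_nonneg _

/-- The quantity `∑_{|a| = 1} |Γ^a f|`. -/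
noncomputable def klainermanSum (f : STn n → ℝ) (z : STn n) : ℝ :=
  ∑ l : GIdx n, |Gop l f z|

lemma klainermanSum_nonneg (f : STn n → ℝ) (z : STn n) : 0 ≤ klainermanSum f z :=
  Finset.sum_nonneg fun _ _ => abs_nonneg _

lemma abs_Gop_le_klainermanSum (l : GIdx n) (f : STn n → ℝ) (z : STn n) :
    |Gop l f z| ≤ klainermanSum f z :=
  Finset.single_le_sum (f := fun l => |Gop l f z|) (fun _ _ => abs_nonneg _) (Finset.mem_univ l)

lemma abs_spacetimeGradient_le_klainermanSum (f : STn n → ℝ) (z : STn n) (α : Fin (n + 1)) :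
    |spacetimeGradient f z α| ≤ klainermanSum f z := by
  cases α using Fin.cases with
  | zero => exact abs_Gop_le_klainermanSum (Sum.inl none) f z
  | succ j => exact abs_Gop_le_klainermanSum (Sum.inl (some j)) f z

lemma abs_SD_le_klainermanSum (f : STn n → ℝ) (z : STn n) : |SD f z| ≤ klainermanSum f z :=
  abs_Gop_le_klainermanSum (Sum.inr (Sum.inr (Sum.inr ()))) f z

/-- The coordinates `(-t, x_1, …, x_n)` of a space-time point, with the index lowered. -/
def loweredCoord (z : STn n) : Fin (n + 1) → ℝ :=
  Fin.cons (-z.1) fun j => z.2 j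

/-- The Lorentz field `x_α ∂_β - x_β ∂_α` with `x_0 = -t`; it is `L_j` for `(α, β) = (j, 0)` and
`Ω_{jk}` for `(α, β) = (j, k)`. -/
noncomputable def lorentzField (α β : Fin (n + 1)) (f : STn n → ℝ) (z : STn n) : ℝ :=
  loweredCoord z α * spacetimeGradient f z β - loweredCoord z β * spacetimeGradient f z α

lemma lorentzField_swap (α β : Fin (n + 1)) (f : STn n → ℝ) (z : STn n) :
    lorentzField α β f z = -lorentzField β α f z :=
  (neg_sub _ _).symm

lemma lorentzField_succ_zero (j : Fin n) (f : STn n → ℝ) (z : STn n) :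
    lorentzField j.succ 0 f z = LD j f z := by
  simp only [lorentzField, loweredCoord, spacetimeGradient, LD, Fin.cons_zero, Fin.cons_succ]
  ring

lemma abs_lorentzField_le_klainermanSum (α β : Fin (n + 1)) (f : STn n → ℝ) (z : STn n) :
    |lorentzField α β f z| ≤ klainermanSum f z := by
  have hboost (j : Fin n) : |lorentzField j.succ 0 f z| ≤ klainermanSum f z := by
    rw [lorentzField_succ_zero]
    exact abs_Gop_le_klainermanSum (Sum.inr (Sum.inl j)) f z
  cases α using Fin.cases with
  | zero =>
    cases β using Fin.cases with
    | zero => simpa [lorentzField] using klainermanSum_nonneg f z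
    | succ k => simpa only [lorentzField_swap 0 k.succ, abs_neg] using hboost k
  | succ j =>
    cases β using Fin.cases with
    | zero => exact hboost j
    | succ k => exact abs_Gop_le_klainermanSum (Sum.inr (Sum.inr (Sum.inl (j, k)))) f z

lemma QF_eq_toBilin' (A : Fin 4 → Fin 4 → ℝ) (v w : STn 3 → ℝ) (z : STn 3) :
    QF A v w z = (Matrix.of A).toBilin' (spacetimeGradient v z) (spacetimeGradient w z) := by
  have hpd4 (f : STn 3 → ℝ) (α : Fin 4) : pd4 α f z = spacetimeGradient f z α := by
    cases α using Fin.cases <;> rfl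
  simp only [QF, hpd4, Matrix.toBilin'_apply, Matrix.of_apply, mul_comm (spacetimeGradient v z _)]

end KlainermanFields

section Decay

variable {n : ℕ} (v w : STn n → ℝ) (z : STn n)

/-- The right-hand side `∑_{|a| = 1} (|Γ^a v| |∂w| + |∂v| |Γ^a w|)` of the decay estimate. -/
noncomputable def nullMajorant : ℝ :=
  ∑ l : GIdx n, (|Gop l v z| * gradN w z + gradN v z * |Gop l w z|)

lemma nullMajorant_eq :
    nullMajorant v w z = klainermanSum v z * gradN w z + gradN v z * klainermanSum w z := by
  simp only [nullMajorant, klainermanSum, Finset.sum_add_distrib, Finset.sum_mul, Finset.mul_sum]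

lemma nullMajorant_nonneg : 0 ≤ nullMajorant v w z := by
  have := gradN_nonneg v z
  have := gradN_nonneg w z
  unfold nullMajorant
  positivity

variable {v w z}

lemma abs_mul_spacetimeGradient_le_nullMajorant {a : ℝ} (ha : |a| ≤ klainermanSum v z)
    (β : Fin (n + 1)) : |a * spacetimeGradient w z β| ≤ nullMajorant v w z := by
  rw [abs_mul, nullMajorant_eq]
  exact le_add_of_le_of_nonneg
    (mul_le_mul ha (abs_spacetimeGradient_le_gradN w z β) (abs_nonneg _) (klainermanSum_nonneg v z))
    (mul_nonneg (gradN_nonneg v z) (klainermanSum_nonneg w z))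

lemma abs_spacetimeGradient_mul_le_nullMajorant {b : ℝ} (hb : |b| ≤ klainermanSum w z)
    (α : Fin (n + 1)) : |spacetimeGradient v z α * b| ≤ nullMajorant v w z := by
  rw [abs_mul, nullMajorant_eq]
  exact le_add_of_nonneg_of_le (mul_nonneg (klainermanSum_nonneg v z) (gradN_nonneg w z))
    (mul_le_mul (abs_spacetimeGradient_le_gradN v z α) hb (abs_nonneg _) (gradN_nonneg v z))

variable (v w z)

lemma time_mul_minkowskiForm_spacetimeGradient :
    z.1 * minkowskiForm n (spacetimeGradient v z) (spacetimeGradient w z) =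
      SD v z * spacetimeGradient w z 0 -
        ∑ j : Fin n, spacetimeGradient v z j.succ * lorentzField j.succ 0 w z := by
  simp only [minkowskiForm_apply, lorentzField_succ_zero, LD, SD, spacetimeGradient, Fin.cons_zero,
    Fin.cons_succ, mul_sub, add_mul, mul_add, Finset.mul_sum, Finset.sum_mul,
    Finset.sum_add_distrib]
  simp only [mul_comm, mul_left_comm]
  ring

lemma time_mul_basicNullForm_spacetimeGradient (α β : Fin (n + 1)) :
    z.1 * basicNullForm α β (spacetimeGradient v z) (spacetimeGradient w z) =
      lorentzField α 0 v z * spacetimeGradient w z β -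
        lorentzField β 0 v z * spacetimeGradient w z α -
        spacetimeGradient v z 0 * lorentzField α β w z := by
  simp only [basicNullForm, lorentzField, loweredCoord, Fin.cons_zero]
  ring

lemma one_add_abs_time_mul_abs_minkowskiForm_le :
    (1 + |z.1|) * |minkowskiForm n (spacetimeGradient v z) (spacetimeGradient w z)| ≤
      2 * (n + 1) * nullMajorant v w z := by
  have habs_sub_sum {a : ℝ} {b : Fin n → ℝ} (ha : |a| ≤ nullMajorant v w z)
      (hb : ∀ j, |b j| ≤ nullMajorant v w z) : |a - ∑ j, b j| ≤ (n + 1) * nullMajorant v w z :=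
    calc |a - ∑ j, b j| ≤ |a| + ∑ j, |b j| :=
          (abs_sub _ _).trans (by gcongr; exact Finset.abs_sum_le_sum_abs _ _)
      _ ≤ nullMajorant v w z + ∑ _j : Fin n, nullMajorant v w z := by gcongr; exact hb _
      _ = (n + 1) * nullMajorant v w z := by
          rw [Finset.sum_const, Finset.card_univ, Fintype.card_fin, nsmul_eq_mul]
          ring
  have htrivial := habs_sub_sum
    (abs_mul_spacetimeGradient_le_nullMajorant (abs_spacetimeGradient_le_klainermanSum v z 0) 0)
    fun j => abs_mul_spacetimeGradient_le_nullMajorant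
      (abs_spacetimeGradient_le_klainermanSum v z j.succ) j.succ
  have hgain := habs_sub_sum
    (abs_mul_spacetimeGradient_le_nullMajorant (abs_SD_le_klainermanSum v z) 0)
    fun j => abs_spacetimeGradient_mul_le_nullMajorant
      (abs_lorentzField_le_klainermanSum j.succ 0 w z) j.succ
  rw [← minkowskiForm_apply] at htrivial
  rw [← time_mul_minkowskiForm_spacetimeGradient, abs_mul] at hgain
  linarith

lemma one_add_abs_time_mul_abs_basicNullForm_le (α β : Fin (n + 1)) :
    (1 + |z.1|) * |basicNullForm α β (spacetimeGradient v z) (spacetimeGradient w z)| ≤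
      5 * nullMajorant v w z := by
  have hproduct (α β : Fin (n + 1)) := abs_mul_spacetimeGradient_le_nullMajorant (w := w)
    (abs_spacetimeGradient_le_klainermanSum v z α) β
  have hboost (α β : Fin (n + 1)) := abs_mul_spacetimeGradient_le_nullMajorant (w := w)
    (abs_lorentzField_le_klainermanSum α 0 v z) β
  have hlorentz := abs_spacetimeGradient_mul_le_nullMajorant (v := v)
    (abs_lorentzField_le_klainermanSum α β w z) 0
  have htrivial : |basicNullForm α β (spacetimeGradient v z) (spacetimeGradient w z)| ≤
      2 * nullMajorant v w z :=
    (abs_sub _ _).trans (by linarith [hproduct α β, hproduct β α])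
  have hgain : |z.1| * |basicNullForm α β (spacetimeGradient v z) (spacetimeGradient w z)| ≤
      3 * nullMajorant v w z := by
    rw [← abs_mul, time_mul_basicNullForm_spacetimeGradient]
    refine (abs_sub _ _).trans ?_
    linarith [hboost α β, hboost β α, hlorentz, abs_sub
      (lorentzField α 0 v z * spacetimeGradient w z β)
      (lorentzField β 0 v z * spacetimeGradient w z α)]
  linarith

/-- The constant of the decay estimate for the coefficients `A`: the basic null forms enter with the
bounds `2 (n + 1)` and `5`, the latter halved by antisymmetrization. -/
noncomputable def nullFormConst (A : Matrix (Fin (n + 1)) (Fin (n + 1)) ℝ) : ℝ :=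
  2 * (n + 1) * |A 0 0| + 5 / 2 * ∑ α, ∑ β, |A α β|

lemma IsNullMatrix.one_add_abs_time_mul_abs_toBilin'_le
    {A : Matrix (Fin (n + 1)) (Fin (n + 1)) ℝ} (hA : IsNullMatrix A) :
    (1 + |z.1|) * |A.toBilin' (spacetimeGradient v z) (spacetimeGradient w z)| ≤
      nullFormConst A * nullMajorant v w z := by
  set a := spacetimeGradient v z
  set b := spacetimeGradient w z
  have hminkowski : (1 + |z.1|) * |minkowskiForm n a b| ≤ 2 * (n + 1) * nullMajorant v w z :=
    one_add_abs_time_mul_abs_minkowskiForm_le v w z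
  have hbasic (α β : Fin (n + 1)) :
      (1 + |z.1|) * |basicNullForm α β a b| ≤ 5 * nullMajorant v w z :=
    one_add_abs_time_mul_abs_basicNullForm_le v w z α β
  calc (1 + |z.1|) * |A.toBilin' a b|
      ≤ (1 + |z.1|) * (|A 0 0| * |minkowskiForm n a b| +
          (∑ α, ∑ β, |A α β| * |basicNullForm α β a b|) / 2) := by
        gcongr
        exact hA.abs_toBilin'_le a b
    _ = |A 0 0| * ((1 + |z.1|) * |minkowskiForm n a b|) +
          (∑ α, ∑ β, |A α β| * ((1 + |z.1|) * |basicNullForm α β a b|)) / 2 := by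
        simp only [mul_left_comm _ (1 + |z.1|), ← Finset.mul_sum]
        ring
    _ ≤ |A 0 0| * (2 * (n + 1) * nullMajorant v w z) +
          (∑ α, ∑ β, |A α β| * (5 * nullMajorant v w z)) / 2 := by
        gcongr |A 0 0| * ?_ + (∑ α, ∑ β, |A α β| * ?_) / 2
        exact hbasic _ _
    _ = nullFormConst A * nullMajorant v w z := by
        simp only [nullFormConst, ← Finset.sum_mul]
        ring

end Decay

theorem null_form_decay_general {n : ℕ} {A : Matrix (Fin (n + 1)) (Fin (n + 1)) ℝ}
    (hA : IsNullMatrix A) :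
    ∃ C > (0 : ℝ), ∀ (v w : STn n → ℝ) (z : STn n),
      DifferentiableAt ℝ v z → DifferentiableAt ℝ w z →
        |A.toBilin' (spacetimeGradient v z) (spacetimeGradient w z)| ≤
          C * (1 + |z.1|)⁻¹ * nullMajorant v w z := by
  refine ⟨nullFormConst A + 1, by unfold nullFormConst; positivity, fun v w z _ _ => ?_⟩
  rw [mul_right_comm, ← div_eq_mul_inv, le_div_iff₀' (by positivity)]
  linarith [hA.one_add_abs_time_mul_abs_toBilin'_le v w z, nullMajorant_nonneg v w z]

/-- Decay estimate for null forms (Lemma 5.4). -/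
theorem null_form_decay (A : Fin 4 → Fin 4 → ℝ) (hA : NullCond A) :
    ∃ C > (0 : ℝ), ∀ v w : STn 3 → ℝ, ContDiff ℝ ∞ v → ContDiff ℝ ∞ w →
      ∀ z : STn 3, 0 ≤ z.1 →
        |QF A v w z| ≤ C * (1 + z.1)⁻¹ *
          ∑ l : GIdx 3, (|Gop l v z| * gradN w z + gradN v z * |Gop l w z|) := by
  obtain ⟨C, hC, hdecay⟩ := null_form_decay_general hA.isNullMatrix
  exact ⟨C, hC, fun v w hv hw z hz => by
    simpa only [QF_eq_toBilin', nullMajorant, abs_of_nonneg hz] using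
      hdecay v w z (hv.differentiable (by simp) z) (hw.differentiable (by simp) z)⟩
end

section
/- For any η > 0 there exists a constant C = C_η > 0 such that for every T > 0, every C^∞ function F on [0,T] × ℝ³, and every C^∞ function u on [0,T] × ℝ³ with compact support in x for each t, satisfying ∂_t²u − Δu = F pointwise: sup_{0<t<T} ‖∂u(t,·)‖_{L²(ℝ³)} + Σ_{j=1}^3 ‖(1+|t−|x||)^{−1/2−η} T_j u‖_{L²((0,T)×ℝ³)} ≤ C ( ‖∂u(0,·)‖_{L²(ℝ³)} + ∫_0^T ‖F(τ,·)‖_{L²(ℝ³)} dτ ), with C independent of T, u, and F. -/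
/-! Multiply `□u = F` by `w ∂ₜu` with the weight `w = A(t - |x|) B(t + |x|)`. If `A` and `B` are
nonincreasing then, completing squares,
`2 ∂ₜu ∇w·∇u - ∂ₜw |∂u|² = -A'B (|∂u|² + 2 ∂ₜu ∂ᵣu) - AB' (|∂u|² - 2 ∂ₜu ∂ᵣu) ≥ -A'B ∑ⱼ |Tⱼu|²`,
so the choice `A(s) = 1 + ∫_s^∞ q`, which lies between `1` and `1 + ∫ q`, controls the good
derivatives with density `-A' = q` as well as the energy. Cauchy–Schwarz bounds the source term by
`∫ ‖F(τ)‖ dτ` times the maximum in time of the square root of the weighted energy, and that maximum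
is absorbed by evaluating the inequality at the time where it is attained.

The factor `B` is a cutoff confining everything to a backward light cone, where all integrals are
finite and differentiation under them is harmless. To keep the weight differentiable at `x = 0`,
`|x|` is replaced by `ρ = √(ε² + |x|²)`; only `|∇ρ| ≤ 1` matters for the squares. Since the bounds
depend neither on `ε` nor on the cone, Fatou's lemma removes both.
-/

open MeasureTheory Real ENNReal FourierTransform
open scoped ContDiff

noncomputable section

variable {n : ℕ}

/-! ### Directional derivatives -/

lemma contDiff_dirD {m k : WithTop ℕ∞} {f : STn n → ℝ} (hf : ContDiff ℝ k f) (hmk : m + 1 ≤ k)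
    (v : STn n) : ContDiff ℝ m (dirD v f) :=
  (hf.fderiv_right hmk).clm_apply contDiff_const

lemma continuous_dirD {f : STn n → ℝ} (hf : ContDiff ℝ 1 f) (v : STn n) :
    Continuous (dirD v f) :=
  (hf.continuous_fderiv one_ne_zero).clm_apply continuous_const

lemma dirD_mul {f g : STn n → ℝ} {p : STn n} (hf : DifferentiableAt ℝ f p)
    (hg : DifferentiableAt ℝ g p) (v : STn n) :
    dirD v (fun q => f q * g q) p = dirD v f p * g p + f p * dirD v g p := by
  simp only [dirD, fderiv_fun_mul hf hg, add_apply, smul_apply, smul_eq_mul]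
  ring

lemma dirD_sq {f : STn n → ℝ} {p : STn n} (hf : DifferentiableAt ℝ f p) (v : STn n) :
    dirD v (fun q => f q ^ 2) p = 2 * (f p * dirD v f p) := by
  simp only [sq, dirD_mul hf hf]
  ring

lemma dirD_comm {f : STn n → ℝ} (hf : ContDiff ℝ 2 f) (v w p : STn n) :
    dirD v (dirD w f) p = dirD w (dirD v f) p := by
  have hf' : DifferentiableAt ℝ (fderiv ℝ f) p :=
    (hf.fderiv_right (m := 1) (by norm_num)).differentiable one_ne_zero p
  have second (a b : STn n) : dirD a (dirD b f) p = fderiv ℝ (fderiv ℝ f) p a b := by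
    change fderiv ℝ (fun q => fderiv ℝ f q b) p a = _
    simp [fderiv_clm_apply hf' (differentiableAt_const b)]
  rw [second, second, hf.contDiffAt.isSymmSndFDerivAt (by simp)]

lemma hasDerivAt_dtD {f : STn n → ℝ} {t : ℝ} {x : Spc n} (hf : DifferentiableAt ℝ f (t, x)) :
    HasDerivAt (fun s => f (s, x)) (dtD f (t, x)) t :=
  hf.hasFDerivAt.comp_hasDerivAt t ((hasDerivAt_id t).prodMk (hasDerivAt_const t x))

lemma fderiv_slice {f : STn n → ℝ} {t : ℝ} {x : Spc n} (hf : DifferentiableAt ℝ f (t, x))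
    (v : Spc n) : fderiv ℝ (fun y => f (t, y)) x v = dirD (0, v) f (t, x) := by
  have h : HasFDerivAt (fun y => f (t, y)) _ x :=
    hf.hasFDerivAt.comp x (hasFDerivAt_prodMk_right t x)
  simp [h.fderiv, dirD]

lemma continuous_boxD {u : STn n → ℝ} (hu : ContDiff ℝ 2 u) : Continuous (boxD u) := by
  have second (v : STn n) : Continuous (dirD v (dirD v u)) :=
    continuous_dirD (contDiff_dirD hu (by norm_num) v) v
  exact (second _).sub (continuous_finsetSum _ fun j _ => second _)

lemma gradN_sq (u : STn n → ℝ) (p : STn n) :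
    gradN u p ^ 2 = dtD u p ^ 2 + ∑ j, dxD j u p ^ 2 :=
  Real.sq_sqrt (by positivity)

lemma contDiff_gradN_sq {u : STn n → ℝ} (hu : ContDiff ℝ 2 u) :
    ContDiff ℝ 1 (fun p => gradN u p ^ 2) := by
  have first (v : STn n) : ContDiff ℝ 1 (fun p => dirD v u p ^ 2) :=
    (contDiff_dirD hu (by norm_num) v).pow 2
  simp only [gradN_sq]
  exact (first _).add (ContDiff.sum fun j _ => first _)

lemma continuous_gradN_sq {u : STn n → ℝ} (hu : ContDiff ℝ 1 u) :
    Continuous (fun p => gradN u p ^ 2) := by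
  simp only [gradN_sq]
  exact ((continuous_dirD hu _).pow 2).add
    (continuous_finsetSum _ fun j _ => (continuous_dirD hu _).pow 2)

lemma dtD_gradN_sq {u : STn n → ℝ} (hu : ContDiff ℝ 2 u) (p : STn n) :
    dtD (fun q => gradN u q ^ 2) p =
      2 * (dtD u p * dtD (dtD u) p) + ∑ j, 2 * (dxD j u p * dtD (dxD j u) p) := by
  have first (v : STn n) : DifferentiableAt ℝ (dirD v u) p :=
    (contDiff_dirD (m := 1) hu (by norm_num) v).differentiable one_ne_zero p
  have ht : DifferentiableAt ℝ (fun q => dtD u q ^ 2) p := (first _).pow 2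
  have hx (j : Fin n) : DifferentiableAt ℝ (fun q => dxD j u q ^ 2) p := (first _).pow 2
  simp only [gradN_sq]
  change fderiv ℝ (fun q => dtD u q ^ 2 + ∑ j, dxD j u q ^ 2) p (1, 0) = _
  rw [fderiv_fun_add ht (.fun_sum fun j _ => hx j), fderiv_fun_sum fun j _ => hx j, add_apply,
    sum_apply]
  exact congr_arg₂ _ (dirD_sq (first _) _) (Finset.sum_congr rfl fun j _ => dirD_sq (first _) _)

/-! ### Functions supported in a backward light cone -/

/-- The slab `(0, t] × ℝⁿ` of space-time. -/
abbrev timeSlab (n : ℕ) (t : ℝ) : Set (STn n) := Set.Ioc 0 t ×ˢ Set.univ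

/-- `f` vanishes outside the solid backward light cone `t + |x| ≤ R`. -/
def SupportedInCone (R : ℝ) (f : STn n → ℝ) : Prop := ∀ p : STn n, R < p.1 + ‖p.2‖ → f p = 0

namespace SupportedInCone

variable {R : ℝ} {f : STn n → ℝ}

lemma mul_right (hf : SupportedInCone R f) (g : STn n → ℝ) :
    SupportedInCone R (fun p => f p * g p) := fun p hp => by simp [hf p hp]

lemma dirD (hf : SupportedInCone R f) (v : STn n) : SupportedInCone R (dirD v f) := by
  intro p hp
  have hopen : IsOpen {q : STn n | R < q.1 + ‖q.2‖} := isOpen_lt (by fun_prop) (by fun_prop)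
  have hzero : f =ᶠ[nhds p] fun _ => 0 := by
    filter_upwards [hopen.mem_nhds hp] with q hq using hf q hq
  simp [_root_.dirD, hzero.fderiv_eq]

lemma eq_zero_of_notMem_closedBall (hf : SupportedInCone R f) {t : ℝ} (ht : 0 ≤ t) {x : Spc n}
    (hx : x ∉ Metric.closedBall 0 R) : f (t, x) = 0 := by
  refine hf _ ?_
  rw [mem_closedBall_zero_iff, not_le] at hx
  exact hx.trans_le (le_add_of_nonneg_left ht)

lemma integrable_slice (hf : SupportedInCone R f) (hc : Continuous f) {t : ℝ} (ht : 0 ≤ t) :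
    Integrable (fun x => f (t, x)) :=
  (hc.comp (by fun_prop)).integrable_of_hasCompactSupport <|
    .intro (isCompact_closedBall 0 R) fun _ => hf.eq_zero_of_notMem_closedBall ht

lemma integrableOn_timeSlab (hf : SupportedInCone R f) (hc : Continuous f) (t : ℝ) :
    IntegrableOn f (timeSlab n t) := by
  have hK : IntegrableOn f (Set.Icc 0 t ×ˢ Metric.closedBall (0 : Spc n) R) :=
    hc.continuousOn.integrableOn_compact (isCompact_Icc.prod (isCompact_closedBall 0 R))
  refine hK.of_forall_sdiff_eq_zero (measurableSet_Ioc.prod MeasurableSet.univ) ?_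
  rintro ⟨s, x⟩ ⟨⟨hs, -⟩, hx⟩
  exact hf.eq_zero_of_notMem_closedBall hs.1.le fun hxR => hx ⟨Set.Ioc_subset_Icc_self hs, hxR⟩

lemma setIntegral_timeSlab (hf : SupportedInCone R f) (hc : Continuous f) (t : ℝ) :
    ∫ z in timeSlab n t, f z = ∫ s in Set.Ioc 0 t, ∫ x, f (s, x) := by
  rw [Measure.volume_eq_prod, setIntegral_prod _ (hf.integrableOn_timeSlab hc t)]
  simp only [Measure.restrict_univ]

lemma continuousOn_integral_slice (hf : SupportedInCone R f) (hc : Continuous f) :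
    ContinuousOn (fun t => ∫ x, f (t, x)) (Set.Ici 0) :=
  continuousOn_integral_of_compact_support (isCompact_closedBall 0 R) hc.continuousOn
    fun _ _ ht => hf.eq_zero_of_notMem_closedBall ht

lemma setIntegral_dtD (hf : SupportedInCone R f) (hc : ContDiff ℝ 1 f) {t : ℝ} (ht : 0 ≤ t) :
    ∫ z in timeSlab n t, dtD f z = (∫ x, f (t, x)) - ∫ x, f (0, x) := by
  have hcont : Continuous (dtD f) := continuous_dirD hc _
  have hint : IntegrableOn (dtD f) (timeSlab n t) := (hf.dirD _).integrableOn_timeSlab hcont t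
  have ftc (x : Spc n) : ∫ s in Set.Ioc 0 t, dtD f (s, x) = f (t, x) - f (0, x) := by
    rw [← intervalIntegral.integral_of_le ht]
    exact intervalIntegral.integral_eq_sub_of_hasDerivAt
      (fun s _ => hasDerivAt_dtD (hc.differentiable one_ne_zero _))
      ((hcont.comp (by fun_prop)).intervalIntegrable 0 t)
  rw [Measure.volume_eq_prod, IntegrableOn, ← Measure.prod_restrict, Measure.restrict_univ] at hint
  rw [Measure.volume_eq_prod, ← Measure.prod_restrict, Measure.restrict_univ,
    integral_prod_symm _ hint]
  simp only [ftc]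
  exact integral_sub (hf.integrable_slice hc.continuous ht)
    (hf.integrable_slice hc.continuous le_rfl)

lemma setIntegral_dxD (hf : SupportedInCone R f) (hc : ContDiff ℝ 1 f) (j : Fin n) (t : ℝ) :
    ∫ z in timeSlab n t, dxD j f z = 0 := by
  have hcont : Continuous (dxD j f) := continuous_dirD hc _
  have hsupp : SupportedInCone R (dxD j f) := hf.dirD _
  have hdiff : Differentiable ℝ f := hc.differentiable one_ne_zero
  rw [hsupp.setIntegral_timeSlab hcont]
  refine setIntegral_eq_zero_of_forall_eq_zero fun s hs => ?_
  have hslice (x : Spc n) :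
      fderiv ℝ (fun y => f (s, y)) x (EuclideanSpace.single j 1) = dxD j f (s, x) :=
    fderiv_slice (hdiff _) _
  have parts := integral_mul_fderiv_eq_neg_fderiv_mul_of_integrable (μ := volume) (𝕜 := ℝ)
    (f := fun _ : Spc n => (1 : ℝ)) (g := fun x => f (s, x)) (v := EuclideanSpace.single j 1)
    (by simp) (by simpa [hslice] using hsupp.integrable_slice hcont hs.1.le)
    (by simpa using hf.integrable_slice hc.continuous hs.1.le)
    (fun _ _ => by fun_prop) (fun _ _ => (hdiff.comp (by fun_prop)) _)
  simpa [hslice] using parts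

end SupportedInCone

/-! ### The weighted energy identity -/

/-- The energy `∫ w |∂u|² dx` of `u` at time `t` with respect to the weight `w`. -/
def weightedEnergy (w u : STn n → ℝ) (t : ℝ) : ℝ := ∫ x, w (t, x) * gradN u (t, x) ^ 2

/-- The density `2 ∂ₜu ∇w·∇u - ∂ₜw |∂u|²` at which the weight `w` dissipates the energy of `u`. -/
def energyDissipation (w u : STn n → ℝ) (p : STn n) : ℝ :=
  2 * ∑ j, dxD j w p * (dtD u p * dxD j u p) - dtD w p * gradN u p ^ 2

lemma multiplier_identity {w u : STn n → ℝ} {p : STn n} (hw : DifferentiableAt ℝ w p)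
    (hu : ContDiff ℝ 2 u) :
    dtD (fun q => w q * gradN u q ^ 2) p -
        2 * ∑ j, dxD j (fun q => w q * (dtD u q * dxD j u q)) p =
      2 * (w p * (dtD u p * boxD u p)) - energyDissipation w u p := by
  have first (v : STn n) : DifferentiableAt ℝ (dirD v u) p :=
    (contDiff_dirD (m := 1) hu (by norm_num) v).differentiable one_ne_zero p
  have ht : dtD (fun q => w q * gradN u q ^ 2) p = dtD w p * gradN u p ^ 2 +
      w p * (2 * (dtD u p * dtD (dtD u) p) + ∑ j, 2 * (dxD j u p * dtD (dxD j u) p)) := by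
    rw [← dtD_gradN_sq hu]
    exact dirD_mul hw ((contDiff_gradN_sq hu).differentiable one_ne_zero p) _
  have hx (j : Fin n) : dxD j (fun q => w q * (dtD u q * dxD j u q)) p =
      dxD j w p * (dtD u p * dxD j u p) +
        w p * (dxD j u p * dtD (dxD j u) p + dtD u p * dxD j (dxD j u) p) := by
    have hcomm : dtD (dxD j u) p = dxD j (dtD u) p := dirD_comm hu _ _ _
    have hprod : dxD j (fun q => dtD u q * dxD j u q) p =
        dxD j u p * dtD (dxD j u) p + dtD u p * dxD j (dxD j u) p := by
      rw [hcomm, mul_comm (dxD j u p)]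
      exact dirD_mul (first _) (first _) _
    rw [← hprod]
    exact dirD_mul hw ((first _).mul (first _)) _
  simp only [ht, hx, boxD, lapD, energyDissipation, Finset.sum_add_distrib, ← Finset.mul_sum]
  ring

section Cone

variable {w u : STn n → ℝ} {R : ℝ}

lemma SupportedInCone.energyDissipation (hw : SupportedInCone R w) (u : STn n → ℝ) :
    SupportedInCone R (energyDissipation w u) := by
  intro p hp
  have ht : dtD w p = 0 := hw.dirD _ p hp
  have hx (j : Fin n) : dxD j w p = 0 := hw.dirD _ p hp
  simp [_root_.energyDissipation, ht, hx]

lemma continuous_energyDissipation (hw : ContDiff ℝ 1 w) (hu : ContDiff ℝ 1 u) :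
    Continuous (energyDissipation w u) :=
  (continuous_const.mul (continuous_finsetSum _ fun _ _ => (continuous_dirD hw _).mul
    ((continuous_dirD hu _).mul (continuous_dirD hu _)))).sub
    ((continuous_dirD hw _).mul (continuous_gradN_sq hu))

lemma weightedEnergy_identity (hw : ContDiff ℝ 1 w) (hcone : SupportedInCone R w)
    (hu : ContDiff ℝ 2 u) {t : ℝ} (ht : 0 ≤ t) :
    weightedEnergy w u t + ∫ z in timeSlab n t, energyDissipation w u z =
      weightedEnergy w u 0 + 2 * ∫ z in timeSlab n t, w z * (dtD u z * boxD u z) := by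
  have hu' : ContDiff ℝ 1 u := hu.of_le one_le_two
  have first (v : STn n) : ContDiff ℝ 1 (dirD v u) := contDiff_dirD hu (by norm_num) v
  have hE : ContDiff ℝ 1 (fun q => w q * gradN u q ^ 2) := hw.mul (contDiff_gradN_sq hu)
  have hP (j : Fin n) : ContDiff ℝ 1 (fun q => w q * (dtD u q * dxD j u q)) :=
    hw.mul ((first _).mul (first _))
  have hEs : SupportedInCone R (fun q => w q * gradN u q ^ 2) := hcone.mul_right _
  have hPs (j : Fin n) : SupportedInCone R (fun q => w q * (dtD u q * dxD j u q)) :=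
    hcone.mul_right _
  have intE : IntegrableOn (dtD fun q => w q * gradN u q ^ 2) (timeSlab n t) :=
    (hEs.dirD _).integrableOn_timeSlab (continuous_dirD hE _) t
  have intP (j : Fin n) :
      IntegrableOn (dxD j fun q => w q * (dtD u q * dxD j u q)) (timeSlab n t) :=
    ((hPs j).dirD _).integrableOn_timeSlab (continuous_dirD (hP j) _) t
  have intF : IntegrableOn (fun z => w z * (dtD u z * boxD u z)) (timeSlab n t) :=
    (hcone.mul_right _).integrableOn_timeSlab
      (hw.continuous.mul ((first _).continuous.mul (continuous_boxD hu))) t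
  have intQ : IntegrableOn (energyDissipation w u) (timeSlab n t) :=
    (hcone.energyDissipation u).integrableOn_timeSlab (continuous_energyDissipation hw hu') t
  have key : ∫ z in timeSlab n t, (dtD (fun q => w q * gradN u q ^ 2) z -
        2 * ∑ j, dxD j (fun q => w q * (dtD u q * dxD j u q)) z) =
      ∫ z in timeSlab n t, (2 * (w z * (dtD u z * boxD u z)) - energyDissipation w u z) := by
    simp only [multiplier_identity (hw.differentiable one_ne_zero _) hu]
  rw [integral_sub intE ((integrable_finsetSum _ fun j _ => intP j).const_mul 2),
    integral_sub (intF.const_mul 2) intQ, integral_const_mul, integral_const_mul,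
    integral_finsetSum _ fun j _ => intP j, hEs.setIntegral_dtD hE ht] at key
  simp only [(hPs _).setIntegral_dxD (hP _), Finset.sum_const_zero] at key
  simp only [weightedEnergy]
  linarith

/-! ### The weighted energy estimate -/

lemma eLpNorm_two_sq_eq_lintegral_ofReal_sq {α : Type*} [MeasurableSpace α] (μ : Measure α)
    (f : α → ℝ) : eLpNorm f 2 μ ^ 2 = ∫⁻ x, ENNReal.ofReal (f x ^ 2) ∂μ := by
  have h := eLpNorm_nnreal_pow_eq_lintegral (f := f) (μ := μ) (p := 2) two_ne_zero
  simp only [NNReal.coe_ofNat, ENNReal.rpow_ofNat, ENNReal.coe_ofNat] at h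
  simp only [h, ← sq_abs (f _), ENNReal.ofReal_pow (abs_nonneg _), Real.enorm_eq_ofReal_abs]

lemma enorm_integral_mul_le_eLpNorm_mul_eLpNorm {α : Type*} [MeasurableSpace α] {μ : Measure α}
    {f g : α → ℝ} (hf : AEStronglyMeasurable f μ) (hg : AEStronglyMeasurable g μ) :
    ‖∫ x, f x * g x ∂μ‖ₑ ≤ eLpNorm f 2 μ * eLpNorm g 2 μ :=
  calc ‖∫ x, f x * g x ∂μ‖ₑ ≤ ∫⁻ x, ‖(f • g) x‖ₑ ∂μ := enorm_integral_le_lintegral_enorm _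
    _ = eLpNorm (f • g) 1 μ := eLpNorm_one_eq_lintegral_enorm.symm
    _ ≤ eLpNorm f 2 μ * eLpNorm g 2 μ := eLpNorm_smul_le_mul_eLpNorm hg hf

lemma add_mul_le_sq_of_sq_le_add_mul {a b m : ℝ≥0∞} (hm : m ≠ ⊤) (h : m ^ 2 ≤ a ^ 2 + b * m) :
    a ^ 2 + b * m ≤ (a + b) ^ 2 := by
  have hle : m ≤ a + b := by
    by_contra! hlt
    have ham : a ≤ m := le_self_add.trans hlt.le
    refine h.not_gt ?_
    calc a ^ 2 + b * m ≤ a * m + b * m := by rw [sq]; gcongr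
      _ = (a + b) * m := (add_mul _ _ _).symm
      _ < m * m := ENNReal.mul_lt_mul_left (pos_of_gt hlt).ne' hm hlt
      _ = m ^ 2 := (sq m).symm
  calc a ^ 2 + b * m ≤ a * (a + b) + b * (a + b) := by rw [sq]; gcongr; exact le_self_add
    _ = (a + b) ^ 2 := by ring

lemma weightedEnergy_nonneg (hw0 : ∀ p, 0 ≤ w p) (t : ℝ) : 0 ≤ weightedEnergy w u t :=
  integral_nonneg fun _ => mul_nonneg (hw0 _) (sq_nonneg _)

lemma ofReal_weightedEnergy (hw : Continuous w) (hcone : SupportedInCone R w)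
    (hw0 : ∀ p, 0 ≤ w p) (hu : ContDiff ℝ 1 u) {t : ℝ} (ht : 0 ≤ t) :
    ENNReal.ofReal (weightedEnergy w u t) =
      ∫⁻ x, ENNReal.ofReal (w (t, x) * gradN u (t, x) ^ 2) :=
  ofReal_integral_eq_lintegral_ofReal
    ((hcone.mul_right _).integrable_slice (hw.mul (continuous_gradN_sq hu)) ht)
    (.of_forall fun _ => mul_nonneg (hw0 _) (sq_nonneg _))

variable {K : ℝ}

lemma ofReal_weightedEnergy_le (hw : Continuous w) (hcone : SupportedInCone R w)
    (hw0 : ∀ p, 0 ≤ w p) (hwK : ∀ p, w p ≤ K) (hu : ContDiff ℝ 1 u) {t : ℝ} (ht : 0 ≤ t) :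
    ENNReal.ofReal (weightedEnergy w u t) ≤
      (ENNReal.ofReal √K * eLpNorm (fun x => gradN u (t, x)) 2 volume) ^ 2 := by
  have hK : 0 ≤ K := (hw0 0).trans (hwK 0)
  rw [ofReal_weightedEnergy hw hcone hw0 hu ht, mul_pow, ← ENNReal.ofReal_pow (Real.sqrt_nonneg K),
    Real.sq_sqrt hK, eLpNorm_two_sq_eq_lintegral_ofReal_sq,
    ← lintegral_const_mul' _ _ ENNReal.ofReal_ne_top]
  refine lintegral_mono fun x => ?_
  rw [← ENNReal.ofReal_mul hK]
  exact ENNReal.ofReal_le_ofReal (mul_le_mul_of_nonneg_right (hwK _) (sq_nonneg _))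

lemma eLpNorm_weight_mul_dtD_le (hw : Continuous w) (hcone : SupportedInCone R w)
    (hw0 : ∀ p, 0 ≤ w p) (hwK : ∀ p, w p ≤ K) (hu : ContDiff ℝ 1 u) {t : ℝ} (ht : 0 ≤ t) :
    eLpNorm (fun x => w (t, x) * dtD u (t, x)) 2 volume ≤
      ENNReal.ofReal (√K * √(weightedEnergy w u t)) := by
  have hK : 0 ≤ K := (hw0 0).trans (hwK 0)
  have pointwise (p : STn n) : (w p * dtD u p) ^ 2 ≤ K * (w p * gradN u p ^ 2) := by
    have hgrad : dtD u p ^ 2 ≤ gradN u p ^ 2 := by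
      rw [gradN_sq]; exact le_add_of_nonneg_right (by positivity)
    calc (w p * dtD u p) ^ 2 = w p * (w p * dtD u p ^ 2) := by ring
      _ ≤ K * (w p * gradN u p ^ 2) := by
          gcongr; exacts [mul_nonneg (hw0 p) (sq_nonneg _), hwK p, hw0 p]
  rw [← ENNReal.pow_le_pow_left_iff two_ne_zero, eLpNorm_two_sq_eq_lintegral_ofReal_sq,
    ← ENNReal.ofReal_pow (by positivity), mul_pow, Real.sq_sqrt hK,
    Real.sq_sqrt (weightedEnergy_nonneg hw0 t), ENNReal.ofReal_mul hK,
    ofReal_weightedEnergy hw hcone hw0 hu ht, ← lintegral_const_mul' _ _ ENNReal.ofReal_ne_top]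
  refine lintegral_mono fun x => ?_
  rw [← ENNReal.ofReal_mul hK]
  exact ENNReal.ofReal_le_ofReal (pointwise _)

lemma ofReal_setIntegral_source_le (hw : ContDiff ℝ 1 w) (hcone : SupportedInCone R w)
    (hw0 : ∀ p, 0 ≤ w p) (hwK : ∀ p, w p ≤ K) (hu : ContDiff ℝ 2 u) {t M : ℝ}
    (hM : ∀ s ∈ Set.Ioc 0 t, weightedEnergy w u s ≤ M) :
    ENNReal.ofReal (∫ z in timeSlab n t, w z * (dtD u z * boxD u z)) ≤
      ENNReal.ofReal (√K * √M) *
        ∫⁻ s in Set.Ioc 0 t, eLpNorm (fun x => boxD u (s, x)) 2 volume := by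
  have hu' : ContDiff ℝ 1 u := hu.of_le one_le_two
  have hwc : Continuous w := hw.continuous
  have hut : Continuous (dtD u) := continuous_dirD hu' _
  have hbox : Continuous (boxD u) := continuous_boxD hu
  have slice (s : ℝ) (hs : s ∈ Set.Ioc 0 t) :
      ‖∫ x, w (s, x) * (dtD u (s, x) * boxD u (s, x))‖ₑ ≤
        ENNReal.ofReal (√K * √M) * eLpNorm (fun x => boxD u (s, x)) 2 volume := by
    simp only [← mul_assoc]
    refine (enorm_integral_mul_le_eLpNorm_mul_eLpNorm
      (Continuous.aestronglyMeasurable (by fun_prop))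
      (Continuous.aestronglyMeasurable (by fun_prop))).trans ?_
    gcongr
    refine (eLpNorm_weight_mul_dtD_le hwc hcone hw0 hwK hu' hs.1.le).trans ?_
    gcongr
    exact hM s hs
  rw [(hcone.mul_right _).setIntegral_timeSlab (by fun_prop)]
  calc ENNReal.ofReal (∫ s in Set.Ioc 0 t, ∫ x, w (s, x) * (dtD u (s, x) * boxD u (s, x)))
      ≤ ‖∫ s in Set.Ioc 0 t, ∫ x, w (s, x) * (dtD u (s, x) * boxD u (s, x))‖ₑ :=
        Real.ofReal_le_enorm _
    _ ≤ ∫⁻ s in Set.Ioc 0 t, ‖∫ x, w (s, x) * (dtD u (s, x) * boxD u (s, x))‖ₑ :=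
        enorm_integral_le_lintegral_enorm _
    _ ≤ ∫⁻ s in Set.Ioc 0 t, ENNReal.ofReal (√K * √M) *
          eLpNorm (fun x => boxD u (s, x)) 2 volume := setLIntegral_mono' measurableSet_Ioc slice
    _ = _ := lintegral_const_mul' _ _ ENNReal.ofReal_ne_top

/-- The right-hand side `‖∂u(0)‖ + ∫₀ᵀ ‖□u(τ)‖ dτ` of the energy inequality, in `L²(ℝⁿ)` norms. -/
def energyData (u : STn n → ℝ) (T : ℝ) : ℝ≥0∞ :=
  eLpNorm (fun x => gradN u (0, x)) 2 volume +
    ∫⁻ τ in Set.Ioc 0 T, eLpNorm (fun x => boxD u (τ, x)) 2 volume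

lemma exists_isMaxOn_weightedEnergy (hw : Continuous w) (hcone : SupportedInCone R w)
    (hu : ContDiff ℝ 1 u) {T : ℝ} (hT : 0 ≤ T) :
    ∃ t₀ ∈ Set.Icc 0 T, IsMaxOn (weightedEnergy w u) (Set.Icc 0 T) t₀ := by
  have hcont : ContinuousOn (weightedEnergy w u) (Set.Icc 0 T) :=
    ((hcone.mul_right _).continuousOn_integral_slice (hw.mul (continuous_gradN_sq hu))).mono
      Set.Icc_subset_Ici_self
  exact isCompact_Icc.exists_isMaxOn (Set.nonempty_Icc.2 hT) hcont

theorem weightedEnergy_add_dissipation_le (hw : ContDiff ℝ 1 w) (hcone : SupportedInCone R w)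
    (hw0 : ∀ p, 0 ≤ w p) (hwK : ∀ p, w p ≤ K) (hu : ContDiff ℝ 2 u)
    (hdiss : ∀ p, 0 ≤ energyDissipation w u p) {t T : ℝ} (ht : t ∈ Set.Icc 0 T) :
    ENNReal.ofReal (weightedEnergy w u t + ∫ z in timeSlab n t, energyDissipation w u z) ≤
      (ENNReal.ofReal (2 * √K) * energyData u T) ^ 2 := by
  have hwc : Continuous w := hw.continuous
  have hu' : ContDiff ℝ 1 u := hu.of_le one_le_two
  obtain ⟨t₀, ht₀, hmax⟩ := exists_isMaxOn_weightedEnergy hwc hcone hu' (ht.1.trans ht.2)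
  set m := √(weightedEnergy w u t₀)
  set a := ENNReal.ofReal √K * eLpNorm (fun x => gradN u (0, x)) 2 volume
  set b := ENNReal.ofReal (2 * √K) *
    ∫⁻ τ in Set.Ioc 0 T, eLpNorm (fun x => boxD u (τ, x)) 2 volume
  have bound (s : ℝ) (hs : s ∈ Set.Icc 0 T) :
      ENNReal.ofReal (weightedEnergy w u s + ∫ z in timeSlab n s, energyDissipation w u z) ≤
        a ^ 2 + b * ENNReal.ofReal m := by
    rw [weightedEnergy_identity hw hcone hu hs.1]
    refine ENNReal.ofReal_add_le.trans
      (add_le_add (ofReal_weightedEnergy_le hwc hcone hw0 hwK hu' le_rfl) ?_)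
    rw [ENNReal.ofReal_mul zero_le_two]
    have hsource := ofReal_setIntegral_source_le hw hcone hw0 hwK hu (t := s)
      fun r hr => hmax ⟨hr.1.le, hr.2.trans hs.2⟩
    calc _ ≤ ENNReal.ofReal 2 * (ENNReal.ofReal (√K * m) *
            ∫⁻ τ in Set.Ioc 0 T, eLpNorm (fun x => boxD u (τ, x)) 2 volume) := by
          gcongr
          refine hsource.trans ?_
          gcongr
          exact hs.2
      _ = b * ENNReal.ofReal m := by
          simp only [b]
          rw [ENNReal.ofReal_mul (Real.sqrt_nonneg K), ENNReal.ofReal_mul zero_le_two]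
          ring
  have absorb : ENNReal.ofReal m ^ 2 ≤ a ^ 2 + b * ENNReal.ofReal m := by
    rw [← ENNReal.ofReal_pow (Real.sqrt_nonneg _), Real.sq_sqrt (weightedEnergy_nonneg hw0 t₀)]
    refine (ENNReal.ofReal_le_ofReal ?_).trans (bound t₀ ht₀)
    exact le_add_of_nonneg_right (integral_nonneg hdiss)
  calc _ ≤ a ^ 2 + b * ENNReal.ofReal m := bound t ht
    _ ≤ (a + b) ^ 2 := add_mul_le_sq_of_sq_le_add_mul ENNReal.ofReal_ne_top absorb
    _ ≤ (ENNReal.ofReal (2 * √K) * energyData u T) ^ 2 := by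
        rw [energyData, mul_add]
        gcongr
        exact mul_le_mul_left (ENNReal.ofReal_le_ofReal
          (le_mul_of_one_le_left (Real.sqrt_nonneg K) one_le_two)) _

end Cone

/-! ### Weights adapted to the null directions -/

/-- The weight `A(t - ρ(x)) B(t + ρ(x))`, a product of functions of the two null coordinates built
from the radial function `ρ`. -/
def nullWeight (A B : ℝ → ℝ) (ρ : Spc n → ℝ) (p : STn n) : ℝ := A (p.1 - ρ p.2) * B (p.1 + ρ p.2)

section NullWeight

variable {A B : ℝ → ℝ} {ρ : Spc n → ℝ} {p : STn n}

lemma contDiff_nullWeight {k : WithTop ℕ∞} (hA : ContDiff ℝ k A) (hB : ContDiff ℝ k B)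
    (hρ : ContDiff ℝ k ρ) : ContDiff ℝ k (nullWeight A B ρ) := by
  have hρ' : ContDiff ℝ k (fun p : STn n => ρ p.2) := hρ.comp contDiff_snd
  exact (hA.comp (contDiff_fst.sub hρ')).mul (hB.comp (contDiff_fst.add hρ'))

lemma dirD_nullWeight (hA : DifferentiableAt ℝ A (p.1 - ρ p.2))
    (hB : DifferentiableAt ℝ B (p.1 + ρ p.2)) (hρ : DifferentiableAt ℝ ρ p.2) (v : STn n) :
    dirD v (nullWeight A B ρ) p =
      deriv A (p.1 - ρ p.2) * B (p.1 + ρ p.2) * (v.1 - fderiv ℝ ρ p.2 v.2) +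
        A (p.1 - ρ p.2) * deriv B (p.1 + ρ p.2) * (v.1 + fderiv ℝ ρ p.2 v.2) := by
  have hr := hρ.hasFDerivAt.comp p (hasFDerivAt_snd (𝕜 := ℝ) (E := ℝ) (F := Spc n))
  have ht := hasFDerivAt_fst (𝕜 := ℝ) (E := ℝ) (F := Spc n) (p := p)
  have hw : HasFDerivAt (nullWeight A B ρ) _ p :=
    (hA.hasDerivAt.comp_hasFDerivAt p (ht.sub hr)).mul
      (hB.hasDerivAt.comp_hasFDerivAt p (ht.add hr))
  rw [dirD, hw.fderiv]
  simp only [Function.comp_apply, Pi.sub_apply, smul_add, add_apply, smul_apply, sub_apply,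
    ContinuousLinearMap.comp_apply, ContinuousLinearMap.coe_fst', ContinuousLinearMap.coe_snd',
    smul_eq_mul]
  ring

lemma energyDissipation_nullWeight (hA : DifferentiableAt ℝ A (p.1 - ρ p.2))
    (hB : DifferentiableAt ℝ B (p.1 + ρ p.2)) (hρ : DifferentiableAt ℝ ρ p.2) (u : STn n → ℝ) :
    energyDissipation (nullWeight A B ρ) u p =
      -deriv A (p.1 - ρ p.2) * B (p.1 + ρ p.2) * (gradN u p ^ 2 +
          2 * dtD u p * ∑ j, fderiv ℝ ρ p.2 (EuclideanSpace.single j 1) * dxD j u p) +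
        A (p.1 - ρ p.2) * -deriv B (p.1 + ρ p.2) * (gradN u p ^ 2 -
          2 * dtD u p * ∑ j, fderiv ℝ ρ p.2 (EuclideanSpace.single j 1) * dxD j u p) := by
  have ht : dtD (nullWeight A B ρ) p = _ := dirD_nullWeight hA hB hρ _
  have hx (j : Fin n) : dxD j (nullWeight A B ρ) p = _ := dirD_nullWeight hA hB hρ _
  simp only [map_zero, sub_zero, add_zero, mul_one] at ht
  have hsum : ∑ j, dxD j (nullWeight A B ρ) p * (dtD u p * dxD j u p) =
      (A (p.1 - ρ p.2) * deriv B (p.1 + ρ p.2) - deriv A (p.1 - ρ p.2) * B (p.1 + ρ p.2)) *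
        dtD u p * ∑ j, fderiv ℝ ρ p.2 (EuclideanSpace.single j 1) * dxD j u p := by
    simp only [hx, Finset.mul_sum]
    exact Finset.sum_congr rfl fun j _ => by ring
  rw [energyDissipation, hsum, ht]
  ring

lemma sum_add_mul_sq_le {ι : Type*} [Fintype ι] {r : ι → ℝ} (hr : ∑ j, r j ^ 2 ≤ 1) (a : ℝ)
    (b : ι → ℝ) :
    ∑ j, (b j + r j * a) ^ 2 ≤ a ^ 2 + ∑ j, b j ^ 2 + 2 * a * ∑ j, r j * b j :=
  calc ∑ j, (b j + r j * a) ^ 2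
      = a ^ 2 * ∑ j, r j ^ 2 + ∑ j, b j ^ 2 + 2 * a * ∑ j, r j * b j := by
        simp only [Finset.mul_sum, ← Finset.sum_add_distrib]
        exact Finset.sum_congr rfl fun j _ => by ring
    _ ≤ _ := by gcongr; exact mul_le_of_le_one_right (sq_nonneg a) hr

lemma le_energyDissipation_nullWeight (hA : DifferentiableAt ℝ A (p.1 - ρ p.2))
    (hB : DifferentiableAt ℝ B (p.1 + ρ p.2)) (hρ : DifferentiableAt ℝ ρ p.2)
    (hgrad : ∑ j, fderiv ℝ ρ p.2 (EuclideanSpace.single j 1) ^ 2 ≤ 1) (hA0 : ∀ s, 0 ≤ A s)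
    (hB0 : ∀ s, 0 ≤ B s) (hA' : Antitone A) (hB' : Antitone B) (u : STn n → ℝ) :
    -deriv A (p.1 - ρ p.2) * B (p.1 + ρ p.2) *
        ∑ j, (dxD j u p + fderiv ℝ ρ p.2 (EuclideanSpace.single j 1) * dtD u p) ^ 2 ≤
      energyDissipation (nullWeight A B ρ) u p := by
  have outgoing := sum_add_mul_sq_le hgrad (dtD u p) (dxD · u p)
  have incoming := sum_add_mul_sq_le (r := fun j => -fderiv ℝ ρ p.2 (EuclideanSpace.single j 1))
    (by simpa using hgrad) (dtD u p) (dxD · u p)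
  simp only [neg_mul _ (dxD _ u p), Finset.sum_neg_distrib, mul_neg, ← sub_eq_add_neg,
    ← gradN_sq] at outgoing incoming
  have hA1 : 0 ≤ -deriv A (p.1 - ρ p.2) := neg_nonneg.2 hA'.deriv_nonpos
  have hB1 : 0 ≤ -deriv B (p.1 + ρ p.2) := neg_nonneg.2 hB'.deriv_nonpos
  rw [energyDissipation_nullWeight hA hB hρ]
  refine le_add_of_le_of_nonneg
    (mul_le_mul_of_nonneg_left outgoing (mul_nonneg hA1 (hB0 _))) ?_
  exact mul_nonneg (mul_nonneg (hA0 _) hB1)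
    ((Finset.sum_nonneg fun _ _ => sq_nonneg _).trans incoming)

end NullWeight

/-! ### The ghost weight -/

/-- The ghost factor `1 + ∫_s^∞ q`, whose derivative `-q` produces the bound on the good derivatives
with density `q`. -/
def ghostFactor (q : ℝ → ℝ) (s : ℝ) : ℝ := 1 + ∫ σ in Set.Ioi s, q σ

section GhostFactor

variable {q : ℝ → ℝ}

lemma one_le_ghostFactor (hq0 : ∀ s, 0 ≤ q s) (s : ℝ) : 1 ≤ ghostFactor q s :=
  le_add_of_nonneg_right (integral_nonneg hq0)

lemma ghostFactor_le (hq0 : ∀ s, 0 ≤ q s) (hqi : Integrable q) (s : ℝ) :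
    ghostFactor q s ≤ 1 + ∫ σ, q σ :=
  add_le_add_right (setIntegral_le_integral hqi (.of_forall hq0)) 1

lemma hasDerivAt_ghostFactor (hq : Continuous q) (hqi : Integrable q) (s : ℝ) :
    HasDerivAt (ghostFactor q) (-q s) s := by
  have hsplit : ghostFactor q =
      fun s => 1 + ((∫ σ in Set.Ioi 0, q σ) - ∫ σ in (0 : ℝ)..s, q σ) := by
    funext s
    rw [ghostFactor, ← intervalIntegral.integral_Ioi_sub_Ioi' hqi.integrableOn hqi.integrableOn]
    ring
  rw [hsplit]
  exact ((hq.integral_hasStrictDerivAt 0 s).hasDerivAt.const_sub _).const_add 1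

lemma contDiff_ghostFactor (hq : Continuous q) (hqi : Integrable q) :
    ContDiff ℝ 1 (ghostFactor q) := by
  have hderiv := hasDerivAt_ghostFactor hq hqi
  refine contDiff_one_iff_deriv.2 ⟨fun s => (hderiv s).differentiableAt, ?_⟩
  rw [funext fun s => (hderiv s).deriv]
  exact hq.neg

lemma antitone_ghostFactor (hq0 : ∀ s, 0 ≤ q s) (hqi : Integrable q) :
    Antitone (ghostFactor q) := fun _ _ hab =>
  add_le_add_right (setIntegral_mono_set hqi.integrableOn (.of_forall hq0)
    (Set.Ioi_subset_Ioi hab).eventuallyLE) 1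

end GhostFactor

/-- A smooth nonincreasing cutoff, equal to `1` on `(-∞, N]` and to `0` on `[N + 1, ∞)`. -/
def coneCutoff (N s : ℝ) : ℝ := Real.smoothTransition (N + 1 - s)

lemma contDiff_coneCutoff (N : ℝ) : ContDiff ℝ 1 (coneCutoff N) :=
  (Real.smoothTransition.contDiff (n := 1)).comp (contDiff_const.sub contDiff_id)

lemma coneCutoff_nonneg (N s : ℝ) : 0 ≤ coneCutoff N s := Real.smoothTransition.nonneg _

lemma coneCutoff_le_one (N s : ℝ) : coneCutoff N s ≤ 1 := Real.smoothTransition.le_one _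

lemma coneCutoff_eq_zero {N s : ℝ} (h : N + 1 ≤ s) : coneCutoff N s = 0 :=
  Real.smoothTransition.zero_of_nonpos (sub_nonpos.2 h)

lemma coneCutoff_eq_one {N s : ℝ} (h : s ≤ N) : coneCutoff N s = 1 :=
  Real.smoothTransition.one_of_one_le (by linarith)

lemma antitone_coneCutoff (N : ℝ) : Antitone (coneCutoff N) := fun _ _ hab =>
  Real.smoothTransition.monotone (sub_le_sub_left hab _)

/-- The regularization `√(ε² + |x|²)` of the norm, smooth also at the origin. -/
def smoothedNorm (ε : ℝ) (x : Spc n) : ℝ := √(ε ^ 2 + ‖x‖ ^ 2)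

lemma norm_le_smoothedNorm (ε : ℝ) (x : Spc n) : ‖x‖ ≤ smoothedNorm ε x :=
  Real.le_sqrt_of_sq_le (le_add_of_nonneg_left (sq_nonneg ε))

section SmoothedNorm

variable {ε : ℝ}

lemma smoothedNorm_pos (hε : 0 < ε) (x : Spc n) : 0 < smoothedNorm ε x :=
  Real.sqrt_pos.2 (by positivity)

lemma contDiff_smoothedNorm {k : WithTop ℕ∞} (hε : 0 < ε) :
    ContDiff ℝ k (smoothedNorm ε : Spc n → ℝ) :=
  (contDiff_const.add (contDiff_norm_sq ℝ)).sqrt fun _ => by positivity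

lemma fderiv_smoothedNorm_single (hε : 0 < ε) (x : Spc n) (j : Fin n) :
    fderiv ℝ (smoothedNorm ε) x (EuclideanSpace.single j 1) = x j / smoothedNorm ε x := by
  have hsq : HasFDerivAt (fun x : Spc n => ε ^ 2 + ‖x‖ ^ 2) (2 • innerSL ℝ x) x :=
    (hasStrictFDerivAt_norm_sq x).hasFDerivAt.const_add _
  have hsqrt : HasFDerivAt (smoothedNorm ε) _ x := hsq.sqrt (by positivity)
  rw [hsqrt.fderiv]
  simp only [smoothedNorm, smul_apply, innerSL_apply_apply, EuclideanSpace.inner_single_right,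
    ringHom_apply, one_mul, nsmul_eq_mul, Nat.cast_ofNat, smul_eq_mul]
  field_simp

lemma sum_fderiv_smoothedNorm_sq_le_one (hε : 0 < ε) (x : Spc n) :
    ∑ j, fderiv ℝ (smoothedNorm ε) x (EuclideanSpace.single j 1) ^ 2 ≤ 1 := by
  have hpos := smoothedNorm_pos hε x
  simp only [fderiv_smoothedNorm_single hε, div_pow, ← Finset.sum_div]
  rw [← EuclideanSpace.real_norm_sq_eq, div_le_one (by positivity)]
  gcongr
  exact norm_le_smoothedNorm ε x

end SmoothedNorm

/-- The derivative `∂_j + (x_j / ρ) ∂_t`. For `ρ = |x|` it is tangent to the light cones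
`t - |x| = const` and coincides with `TD`. -/
def goodDeriv (ρ : Spc n → ℝ) (j : Fin n) (u : STn n → ℝ) (p : STn n) : ℝ :=
  dxD j u p + p.2 j / ρ p.2 * dtD u p

lemma continuous_goodDeriv {ρ : Spc n → ℝ} (hρ : Continuous ρ) (hρ0 : ∀ x, ρ x ≠ 0)
    {u : STn n → ℝ} (hu : ContDiff ℝ 1 u) (j : Fin n) : Continuous (goodDeriv ρ j u) := by
  have ht : Continuous (dtD u) := continuous_dirD hu _
  have hx : Continuous (dxD j u) := continuous_dirD hu _
  have hr : Continuous fun p : STn n => p.2 j / ρ p.2 :=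
    Continuous.div (by fun_prop) (by fun_prop) fun p => hρ0 p.2
  exact hx.add (hr.mul ht)

/-- The regularized ghost weight: a null weight cut off to the backward cone `t + |x| ≤ N + 1`. -/
def ghostWeight (q : ℝ → ℝ) (ε N : ℝ) : STn n → ℝ :=
  nullWeight (ghostFactor q) (coneCutoff N) (smoothedNorm ε)

lemma supportedInCone_ghostWeight (q : ℝ → ℝ) (ε N : ℝ) :
    SupportedInCone (N + 1) (ghostWeight q ε N : STn n → ℝ) := by
  intro p hp
  have hge : N + 1 ≤ p.1 + smoothedNorm ε p.2 :=
    hp.le.trans (add_le_add_right (norm_le_smoothedNorm ε p.2) _)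
  simp [ghostWeight, nullWeight, coneCutoff_eq_zero hge]

section GhostWeight

variable {q : ℝ → ℝ} {ε : ℝ}

lemma coneCutoff_le_ghostWeight (hq0 : ∀ s, 0 ≤ q s) (ε N : ℝ) (p : STn n) :
    coneCutoff N (p.1 + smoothedNorm ε p.2) ≤ ghostWeight q ε N p :=
  le_mul_of_one_le_left (coneCutoff_nonneg _ _) (one_le_ghostFactor hq0 _)

lemma ghostWeight_nonneg (hq0 : ∀ s, 0 ≤ q s) (ε N : ℝ) (p : STn n) :
    0 ≤ ghostWeight q ε N p :=
  (coneCutoff_nonneg _ _).trans (coneCutoff_le_ghostWeight hq0 ε N p)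

lemma ghostWeight_le (hq0 : ∀ s, 0 ≤ q s) (hqi : Integrable q) (ε N : ℝ) (p : STn n) :
    ghostWeight q ε N p ≤ 1 + ∫ σ, q σ :=
  (mul_le_of_le_one_right (zero_le_one.trans (one_le_ghostFactor hq0 _))
    (coneCutoff_le_one _ _)).trans (ghostFactor_le hq0 hqi _)

lemma contDiff_ghostWeight (hq : Continuous q) (hqi : Integrable q) (hε : 0 < ε) (N : ℝ) :
    ContDiff ℝ 1 (ghostWeight q ε N : STn n → ℝ) :=
  contDiff_nullWeight (contDiff_ghostFactor hq hqi) (contDiff_coneCutoff N)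
    (contDiff_smoothedNorm hε)

lemma le_energyDissipation_ghostWeight (hq : Continuous q) (hq0 : ∀ s, 0 ≤ q s)
    (hqi : Integrable q) (hε : 0 < ε) (N : ℝ) (u : STn n → ℝ) (p : STn n) :
    q (p.1 - smoothedNorm ε p.2) * coneCutoff N (p.1 + smoothedNorm ε p.2) *
        ∑ j, goodDeriv (smoothedNorm ε) j u p ^ 2 ≤
      energyDissipation (ghostWeight q ε N) u p := by
  have hA := hasDerivAt_ghostFactor hq hqi (p.1 - smoothedNorm ε p.2)
  have h := le_energyDissipation_nullWeight hA.differentiableAt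
    ((contDiff_coneCutoff N).differentiable one_ne_zero _)
    ((contDiff_smoothedNorm (k := 1) hε).differentiable one_ne_zero _)
    (sum_fderiv_smoothedNorm_sq_le_one hε p.2)
    (fun s => zero_le_one.trans (one_le_ghostFactor hq0 s)) (coneCutoff_nonneg N)
    (antitone_ghostFactor hq0 hqi) (antitone_coneCutoff N) u
  simp only [hA.deriv, neg_neg, fderiv_smoothedNorm_single hε] at h
  exact h

end GhostWeight

/-! ### Removal of the cutoff and of the regularization -/

lemma lintegral_le_of_tendsto {α : Type*} [MeasurableSpace α] {μ : Measure α}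
    {f : ℕ → α → ℝ≥0∞} {g : α → ℝ≥0∞} {c : ℝ≥0∞} (hf : ∀ k, AEMeasurable (f k) μ)
    (hlim : ∀ x, Filter.Tendsto (fun k => f k x) Filter.atTop (nhds (g x)))
    (hle : ∀ k, ∫⁻ x, f k x ∂μ ≤ c) : ∫⁻ x, g x ∂μ ≤ c :=
  calc ∫⁻ x, g x ∂μ = ∫⁻ x, Filter.liminf (fun k => f k x) Filter.atTop ∂μ := by
        simp only [(hlim _).liminf_eq]
    _ ≤ Filter.liminf (fun k => ∫⁻ x, f k x ∂μ) Filter.atTop := lintegral_liminf_le' hf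
    _ ≤ c := Filter.liminf_le_of_frequently_le' (.of_forall hle)

section Limit

variable {ε : ℕ → ℝ}

lemma tendsto_smoothedNorm (hε : Filter.Tendsto ε Filter.atTop (nhds 0)) (x : Spc n) :
    Filter.Tendsto (fun k => smoothedNorm (ε k) x) Filter.atTop (nhds ‖x‖) := by
  have h := ((hε.pow 2).add_const (‖x‖ ^ 2)).sqrt
  simpa [smoothedNorm] using h

lemma tendsto_coneCutoff (hε : Filter.Tendsto ε Filter.atTop (nhds 0)) (t : ℝ) (x : Spc n) :
    Filter.Tendsto (fun k : ℕ => coneCutoff k (t + smoothedNorm (ε k) x)) Filter.atTop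
      (nhds 1) := by
  have hbdd : ∀ᶠ k in Filter.atTop, t + smoothedNorm (ε k) x ≤ t + ‖x‖ + 1 :=
    ((tendsto_smoothedNorm hε x).const_add t).eventually_le_const (lt_add_one _)
  have hlarge : ∀ᶠ k : ℕ in Filter.atTop, t + ‖x‖ + 1 ≤ k :=
    tendsto_natCast_atTop_atTop.eventually_ge_atTop _
  refine tendsto_const_nhds.congr' ?_
  filter_upwards [hbdd, hlarge] with k hk hk'
  exact (coneCutoff_eq_one (hk.trans hk')).symm

lemma tendsto_goodDeriv (hε : Filter.Tendsto ε Filter.atTop (nhds 0)) (j : Fin n)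
    (u : STn n → ℝ) (p : STn n) :
    Filter.Tendsto (fun k => goodDeriv (smoothedNorm (ε k)) j u p) Filter.atTop
      (nhds (goodDeriv (‖·‖) j u p)) := by
  refine Filter.Tendsto.const_add _ (Filter.Tendsto.mul_const _ ?_)
  by_cases hx : p.2 = 0
  · -- Both sides vanish at the origin, by the convention `0 / 0 = 0`.
    simp [hx]
  · exact tendsto_const_nhds.div (tendsto_smoothedNorm hε p.2) (norm_ne_zero_iff.2 hx)

end Limit

section Bounds

variable {q : ℝ → ℝ} {u : STn n → ℝ} {t T : ℝ} {ε : ℝ}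

lemma energyDissipation_ghostWeight_nonneg (hq : Continuous q) (hq0 : ∀ s, 0 ≤ q s)
    (hqi : Integrable q) (hε : 0 < ε) (N : ℝ) (u : STn n → ℝ) (p : STn n) :
    0 ≤ energyDissipation (ghostWeight q ε N) u p :=
  (mul_nonneg (mul_nonneg (hq0 _) (coneCutoff_nonneg _ _))
    (Finset.sum_nonneg fun _ _ => sq_nonneg _)).trans
    (le_energyDissipation_ghostWeight hq hq0 hqi hε N u p)

lemma ghostWeight_energy_le (hq : Continuous q) (hq0 : ∀ s, 0 ≤ q s) (hqi : Integrable q)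
    (hu : ContDiff ℝ 2 u) (ht : t ∈ Set.Icc 0 T) (hε : 0 < ε) (N : ℝ) :
    ENNReal.ofReal (weightedEnergy (ghostWeight q ε N) u t +
        ∫ z in timeSlab n t, energyDissipation (ghostWeight q ε N) u z) ≤
      (ENNReal.ofReal (2 * √(1 + ∫ s, q s)) * energyData u T) ^ 2 :=
  weightedEnergy_add_dissipation_le (contDiff_ghostWeight hq hqi hε N)
    (supportedInCone_ghostWeight q ε N) (ghostWeight_nonneg hq0 ε N)
    (ghostWeight_le hq0 hqi ε N) hu (energyDissipation_ghostWeight_nonneg hq hq0 hqi hε N u) ht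

lemma lintegral_coneCutoff_mul_gradN_sq_le (hq : Continuous q) (hq0 : ∀ s, 0 ≤ q s)
    (hqi : Integrable q) (hu : ContDiff ℝ 2 u) (ht : t ∈ Set.Icc 0 T) (hε : 0 < ε) (N : ℝ) :
    ∫⁻ x, ENNReal.ofReal (coneCutoff N (t + smoothedNorm ε x) * gradN u (t, x) ^ 2) ≤
      (ENNReal.ofReal (2 * √(1 + ∫ s, q s)) * energyData u T) ^ 2 :=
  calc _ ≤ ∫⁻ x, ENNReal.ofReal (ghostWeight q ε N (t, x) * gradN u (t, x) ^ 2) :=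
        lintegral_mono fun x => ENNReal.ofReal_le_ofReal <|
          mul_le_mul_of_nonneg_right (coneCutoff_le_ghostWeight hq0 ε N (t, x)) (sq_nonneg _)
    _ = ENNReal.ofReal (weightedEnergy (ghostWeight q ε N) u t) :=
        (ofReal_weightedEnergy (contDiff_ghostWeight hq hqi hε N).continuous
          (supportedInCone_ghostWeight q ε N) (ghostWeight_nonneg hq0 ε N)
          (hu.of_le one_le_two) ht.1).symm
    _ ≤ _ := (ENNReal.ofReal_le_ofReal (le_add_of_nonneg_right (integral_nonneg
        (energyDissipation_ghostWeight_nonneg hq hq0 hqi hε N u)))).trans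
        (ghostWeight_energy_le hq hq0 hqi hu ht hε N)

lemma lintegral_coneCutoff_mul_goodDeriv_sq_le (hq : Continuous q) (hq0 : ∀ s, 0 ≤ q s)
    (hqi : Integrable q) (hu : ContDiff ℝ 2 u) (hT : 0 ≤ T) (hε : 0 < ε) (N : ℝ) (j : Fin n) :
    ∫⁻ z in timeSlab n T, ENNReal.ofReal (q (z.1 - smoothedNorm ε z.2) *
        coneCutoff N (z.1 + smoothedNorm ε z.2) * goodDeriv (smoothedNorm ε) j u z ^ 2) ≤
      (ENNReal.ofReal (2 * √(1 + ∫ s, q s)) * energyData u T) ^ 2 := by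
  have pointwise (z : STn n) : q (z.1 - smoothedNorm ε z.2) *
        coneCutoff N (z.1 + smoothedNorm ε z.2) * goodDeriv (smoothedNorm ε) j u z ^ 2 ≤
      energyDissipation (ghostWeight q ε N) u z := by
    refine le_trans ?_ (le_energyDissipation_ghostWeight hq hq0 hqi hε N u z)
    refine mul_le_mul_of_nonneg_left ?_ (mul_nonneg (hq0 _) (coneCutoff_nonneg _ _))
    exact Finset.single_le_sum (fun i _ => sq_nonneg (goodDeriv (smoothedNorm ε) i u z))
      (Finset.mem_univ j)
  have integrable : IntegrableOn (energyDissipation (ghostWeight q ε N) u) (timeSlab n T) :=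
    ((supportedInCone_ghostWeight q ε N).energyDissipation u).integrableOn_timeSlab
      (continuous_energyDissipation (contDiff_ghostWeight hq hqi hε N) (hu.of_le one_le_two)) T
  calc _ ≤ ∫⁻ z in timeSlab n T, ENNReal.ofReal (energyDissipation (ghostWeight q ε N) u z) :=
        lintegral_mono fun z => ENNReal.ofReal_le_ofReal (pointwise z)
    _ = ENNReal.ofReal (∫ z in timeSlab n T, energyDissipation (ghostWeight q ε N) u z) :=
        (ofReal_integral_eq_lintegral_ofReal integrable
          (.of_forall (energyDissipation_ghostWeight_nonneg hq hq0 hqi hε N u))).symm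
    _ ≤ _ := (ENNReal.ofReal_le_ofReal (le_add_of_nonneg_left
        (weightedEnergy_nonneg (ghostWeight_nonneg hq0 ε N) T))).trans
        (ghostWeight_energy_le hq hq0 hqi hu ⟨hT, le_rfl⟩ hε N)

theorem eLpNorm_gradN_le (hq : Continuous q) (hq0 : ∀ s, 0 ≤ q s) (hqi : Integrable q)
    (hu : ContDiff ℝ 2 u) (ht : t ∈ Set.Icc 0 T) :
    eLpNorm (fun x => gradN u (t, x)) 2 volume ≤
      ENNReal.ofReal (2 * √(1 + ∫ s, q s)) * energyData u T := by
  have hε (k : ℕ) : 0 < 1 / ((k : ℝ) + 1) := by positivity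
  have hgrad : Continuous (fun x => gradN u (t, x) ^ 2) :=
    (continuous_gradN_sq (hu.of_le one_le_two)).comp (by fun_prop)
  rw [← ENNReal.pow_le_pow_left_iff two_ne_zero, eLpNorm_two_sq_eq_lintegral_ofReal_sq]
  refine lintegral_le_of_tendsto (fun k => ?_) (fun x => ENNReal.tendsto_ofReal ?_)
    fun k => lintegral_coneCutoff_mul_gradN_sq_le hq hq0 hqi hu ht (hε k) k
  · have hρ := (contDiff_smoothedNorm (n := n) (k := 1) (hε k)).continuous
    have hB := (contDiff_coneCutoff k).continuous
    exact (Continuous.measurable (by fun_prop)).ennreal_ofReal.aemeasurable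
  · simpa only [one_mul] using
      (tendsto_coneCutoff tendsto_one_div_add_atTop_nhds_zero_nat t x).mul_const _

theorem lintegral_goodDeriv_sq_le (hq : Continuous q) (hq0 : ∀ s, 0 ≤ q s) (hqi : Integrable q)
    (hu : ContDiff ℝ 2 u) (hT : 0 ≤ T) (j : Fin n) :
    ∫⁻ z in timeSlab n T, ENNReal.ofReal (q (z.1 - ‖z.2‖) * goodDeriv (‖·‖) j u z ^ 2) ≤
      (ENNReal.ofReal (2 * √(1 + ∫ s, q s)) * energyData u T) ^ 2 := by
  have hε (k : ℕ) : 0 < 1 / ((k : ℝ) + 1) := by positivity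
  have hlim := tendsto_one_div_add_atTop_nhds_zero_nat (𝕜 := ℝ)
  refine lintegral_le_of_tendsto (fun k => ?_) (fun z => ENNReal.tendsto_ofReal ?_)
    fun k => lintegral_coneCutoff_mul_goodDeriv_sq_le hq hq0 hqi hu hT (hε k) k j
  · have hρ := (contDiff_smoothedNorm (n := n) (k := 1) (hε k)).continuous
    have hB := (contDiff_coneCutoff k).continuous
    have hgood := continuous_goodDeriv hρ (fun x => (smoothedNorm_pos (hε k) x).ne')
      (hu.of_le one_le_two) j
    exact (Continuous.measurable (by fun_prop)).ennreal_ofReal.aemeasurable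
  · have hqlim := (hq.tendsto _).comp ((tendsto_smoothedNorm hlim z.2).const_sub z.1)
    simpa only [mul_one, Function.comp_apply] using
      (hqlim.mul (tendsto_coneCutoff hlim z.1 z.2)).mul ((tendsto_goodDeriv hlim j u z).pow 2)

end Bounds

lemma continuous_one_add_abs_rpow_sq (a : ℝ) :
    Continuous fun s : ℝ => ((1 + |s|) ^ a) ^ 2 :=
  (Continuous.rpow_const (by fun_prop) fun s => Or.inl (by positivity)).pow 2

lemma integrable_one_add_abs_rpow_sq {a : ℝ} (ha : a < -(1 / 2)) :
    Integrable fun s : ℝ => ((1 + |s|) ^ a) ^ 2 := by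
  have h := integrable_one_add_norm (E := ℝ) (μ := volume) (r := -(a * 2))
    (by rw [Module.finrank_self]; push_cast; linarith)
  refine h.congr (.of_forall fun s => ?_)
  simp only [neg_neg, Real.norm_eq_abs]
  rw [Real.rpow_mul (by positivity), Real.rpow_ofNat]

theorem ghost_weight_energy_general {q : ℝ → ℝ} (hq : Continuous q) (hq0 : ∀ s, 0 ≤ q s)
    (hqi : Integrable q) {T : ℝ} (hT : 0 ≤ T) {F u : STn n → ℝ} (hu : ContDiff ℝ 2 u)
    (hF : ∀ z : STn n, 0 ≤ z.1 → z.1 ≤ T → boxD u z = F z) :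
    (⨆ (t : ℝ) (_ : t ∈ Set.Ioo 0 T), eLpNorm (fun x => gradN u (t, x)) 2 volume) +
        ∑ j : Fin n, (∫⁻ z in Set.Ioo 0 T ×ˢ (Set.univ : Set (Spc n)),
          ENNReal.ofReal (q (z.1 - ‖z.2‖) * goodDeriv (‖·‖) j u z ^ 2)) ^ (1/2 : ℝ) ≤
      ENNReal.ofReal ((n + 1) * (2 * √(1 + ∫ s, q s))) *
        (eLpNorm (fun x => gradN u (0, x)) 2 volume +
          ∫⁻ τ in Set.Ioc 0 T, eLpNorm (fun x => F (τ, x)) 2 volume) := by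
  have hdata : eLpNorm (fun x => gradN u (0, x)) 2 volume +
      ∫⁻ τ in Set.Ioc 0 T, eLpNorm (fun x => F (τ, x)) 2 volume = energyData u T := by
    rw [energyData]
    congr 1
    refine setLIntegral_congr_fun measurableSet_Ioc fun τ hτ => ?_
    simp only [hF (τ, _) hτ.1.le hτ.2]
  have energy := iSup₂_le fun t (ht : t ∈ Set.Ioo 0 T) =>
    eLpNorm_gradN_le hq hq0 hqi hu (Set.Ioo_subset_Icc_self ht)
  have good (j : Fin n) : (∫⁻ z in Set.Ioo 0 T ×ˢ (Set.univ : Set (Spc n)),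
        ENNReal.ofReal (q (z.1 - ‖z.2‖) * goodDeriv (‖·‖) j u z ^ 2)) ^ (1/2 : ℝ) ≤
      ENNReal.ofReal (2 * √(1 + ∫ s, q s)) * energyData u T := by
    rw [one_div, ENNReal.rpow_inv_le_iff two_pos, ENNReal.rpow_ofNat]
    exact (lintegral_mono_set (Set.prod_mono_left Set.Ioo_subset_Ioc_self)).trans
      (lintegral_goodDeriv_sq_le hq hq0 hqi hu hT j)
  rw [hdata, ENNReal.ofReal_mul (by positivity)]
  refine (add_le_add energy (Finset.sum_le_sum fun j _ => good j)).trans_eq ?_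
  rw [Finset.sum_const, Finset.card_univ, Fintype.card_fin, nsmul_eq_mul,
    ENNReal.ofReal_add n.cast_nonneg zero_le_one, ENNReal.ofReal_natCast, ENNReal.ofReal_one]
  ring

end

/-- The ghost-weight energy estimate of Alinhac and Lindblad–Rodnianski
(Lemma B.1). -/
theorem ghost_weight_energy (η : ℝ) (hη : 0 < η) :
    ∃ C > (0 : ℝ), ∀ T : ℝ, 0 < T → ∀ F u : STn 3 → ℝ,
      ContDiff ℝ ∞ F → ContDiff ℝ ∞ u →
      (∀ t : ℝ, HasCompactSupport (fun x => u (t, x))) →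
      (∀ z : STn 3, 0 ≤ z.1 → z.1 ≤ T → boxD u z = F z) →
      (⨆ (t : ℝ) (_ : t ∈ Set.Ioo 0 T), eLpNorm (fun x => gradN u (t, x)) 2 volume) +
          ∑ j : Fin 3,
            (∫⁻ z in Set.Ioo 0 T ×ˢ (Set.univ : Set (Spc 3)),
              ENNReal.ofReal
                (((1 + |z.1 - ‖z.2‖|) ^ (-(1/2) - η)) ^ 2 * (TD j u z) ^ 2)) ^ (1/2 : ℝ) ≤
        ENNReal.ofReal C *
          (eLpNorm (fun x => gradN u (0, x)) 2 volume +
            ∫⁻ τ in Set.Ioc (0 : ℝ) T, eLpNorm (fun x => F (τ, x)) 2 volume) := by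
  set q : ℝ → ℝ := fun s => ((1 + |s|) ^ (-(1/2) - η)) ^ 2
  have hqi : Integrable q := integrable_one_add_abs_rpow_sq (by linarith)
  have hq0 (s : ℝ) : 0 ≤ q s := sq_nonneg _
  refine ⟨((3 : ℕ) + 1) * (2 * √(1 + ∫ s, q s)), ?_, fun T hT F u _ hu _ hF => ?_⟩
  · have := integral_nonneg (μ := volume) (f := q) hq0
    positivity
  · exact ghost_weight_energy_general (continuous_one_add_abs_rpow_sq _) hq0 hqi hT.le
      (contDiff_infty.1 hu 2) hF
end
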